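/- Define ρ₀ : ℝ → ℝ by ρ₀(x) = 2/3 for 0 ≤ x ≤ 1/2, ρ₀(x) = 4/3 for 1/2 < x ≤ 1, and ρ₀(x) = 0 otherwise, and define f : ℝ → ℝ by f(x) = x + 1/2 for 0 ≤ x ≤ 1/2, f(x) = 2(1 − x) for 1/2 < x ≤ 1, and f(x) = x otherwise. Let μ₀ be Lebesgue measure on ℝ with density ρ₀. Then the pushforward of μ₀ under f equals μ₀. -/

import Mathlib

open MeasureTheory

/-- The invariant density of the piecewise expanding map of Section 2.2. -/
noncomputable def rho12 (x : ℝ) : ℝ :=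
  if 0 ≤ x ∧ x ≤ 1/2 then 2/3 else if 1/2 < x ∧ x ≤ 1 then 4/3 else 0

/-- The piecewise expanding map of Section 2.2 (extended by the identity off `[0,1]`). -/
noncomputable def f12 (x : ℝ) : ℝ :=
  if 0 ≤ x ∧ x ≤ 1/2 then x + 1/2 else if 1/2 < x ∧ x ≤ 1 then 2*(1-x) else x

/-!
Let `A = [0, 1/2]` and `B = (1/2, 1]`. Up to null sets the left branch of the map translates `A`
onto `B` and the right branch stretches `B` by the factor `2` onto `A ∪ B`. Hence the pushforward
sends `λ|A` to `λ|B` and `λ|B` to `(λ|A + λ|B) / 2`, and the vector of weights `(2/3, 4/3)` is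
fixed by the resulting transition matrix.
-/

open Set Module

section Restrict

variable {α β : Type*} [MeasurableSpace α] [MeasurableSpace β]

theorem withDensity_indicator_const (μ : Measure α) {s : Set α} (hs : MeasurableSet s)
    (c : ENNReal) : μ.withDensity (s.indicator fun _ => c) = c • μ.restrict s := by
  rw [withDensity_indicator hs, withDensity_const]

theorem map_restrict_of_eqOn_measurableEmbedding (μ : Measure α) {f g : α → β} {s : Set α}
    (hs : MeasurableSet s) (hg : MeasurableEmbedding g) (hfg : EqOn f g s) :
    (μ.restrict s).map f = (μ.map g).restrict (f '' s) := by
  rw [hfg.image_eq, hg.restrict_map, hg.injective.preimage_image]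
  exact Measure.map_congr (ae_restrict_of_forall_mem hs hfg)

end Restrict

section Homothety

variable {E : Type*} [NormedAddCommGroup E] [NormedSpace ℝ E] [MeasurableSpace E] [BorelSpace E]
  [FiniteDimensional ℝ E] (μ : Measure E) [μ.IsAddHaarMeasure]

theorem map_smul_add_addHaar {a : ℝ} (ha : a ≠ 0) (v : E) :
    μ.map (fun x => a • x + v) = ENNReal.ofReal |(a ^ finrank ℝ E)⁻¹| • μ := by
  calc μ.map (fun x => a • x + v)
      = (μ.map (a • ·)).map (· + v) :=
        (Measure.map_map (measurable_add_const v) (measurable_const_smul a)).symm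
    _ = ENNReal.ofReal |(a ^ finrank ℝ E)⁻¹| • μ := by
        rw [Measure.map_addHaar_smul μ ha, Measure.map_smul, map_add_right_eq_self]

theorem map_restrict_addHaar_of_eqOn_smul_add {a : ℝ} (ha : a ≠ 0) {v : E} {f : E → E}
    {s : Set E} (hs : MeasurableSet s) (hf : EqOn f (fun x => a • x + v) s) :
    (μ.restrict s).map f = ENNReal.ofReal |(a ^ finrank ℝ E)⁻¹| • μ.restrict (f '' s) := by
  have embedding : MeasurableEmbedding fun x : E => a • x + v :=
    (measurableEmbedding_addRight v).comp (measurableEmbedding_const_smul₀ ha)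
  rw [map_restrict_of_eqOn_measurableEmbedding μ hs embedding hf, map_smul_add_addHaar μ ha,
    Measure.restrict_smul]

end Homothety

theorem eqOn_f12_Icc : EqOn f12 (fun x => x + 1/2) (Icc 0 (1/2)) :=
  fun _ hx => if_pos hx

theorem eqOn_f12_Ioc : EqOn f12 (fun x => 2 * (1 - x)) (Ioc (1/2) 1) :=
  fun _ hx => (if_neg fun h => hx.1.not_ge h.2).trans (if_pos hx)

theorem measurable_f12 : Measurable f12 :=
  Measurable.ite measurableSet_Icc (by fun_prop)
    (Measurable.ite measurableSet_Ioc (by fun_prop) (by fun_prop))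

theorem image_f12_Icc : f12 '' Icc 0 (1/2) = Icc (1/2) 1 := by
  rw [eqOn_f12_Icc.image_eq, image_add_const_Icc]
  norm_num

theorem image_f12_Ioc : f12 '' Ioc (1/2) 1 = Ico 0 1 := by
  rw [eqOn_f12_Ioc.image_eq, ← image_image (2 * ·) (1 - ·), image_const_sub_Ioc,
    image_mul_left_Ico two_pos]
  norm_num

theorem map_f12_volume_restrict_Icc :
    (volume.restrict (Icc 0 (1/2))).map f12 = volume.restrict (Ioc (1/2) 1) := by
  have translation : EqOn f12 (fun x => (1 : ℝ) • x + 1/2) (Icc 0 (1/2)) := by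
    simpa only [one_smul] using eqOn_f12_Icc
  rw [map_restrict_addHaar_of_eqOn_smul_add volume one_ne_zero measurableSet_Icc translation,
    image_f12_Icc, restrict_Ioc_eq_restrict_Icc]
  simp

theorem map_f12_volume_restrict_Ioc :
    (volume.restrict (Ioc (1/2) 1)).map f12 =
      ENNReal.ofReal (1/2) • (volume.restrict (Icc 0 (1/2)) + volume.restrict (Ioc (1/2) 1)) := by
  have homothety : EqOn f12 (fun x => (-2 : ℝ) • x + 2) (Ioc (1/2) 1) :=
    eqOn_f12_Ioc.trans fun x _ => by simp only [smul_eq_mul]; ring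
  have restrict_Ico : volume.restrict (Ico (0 : ℝ) 1) =
      volume.restrict (Icc 0 (1/2)) + volume.restrict (Ioc (1/2) 1) := by
    have disjoint : Disjoint (Icc (0 : ℝ) (1/2)) (Ioc (1/2) 1) :=
      disjoint_left.2 fun _ hA hB => hB.1.not_ge hA.2
    rw [restrict_Ico_eq_restrict_Icc, ← Measure.restrict_union disjoint measurableSet_Ioc,
      Icc_union_Ioc_eq_Icc (by norm_num) (by norm_num)]
  rw [map_restrict_addHaar_of_eqOn_smul_add volume (by norm_num) measurableSet_Ioc homothety,
    image_f12_Ioc, restrict_Ico]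
  norm_num [abs_of_pos]

theorem ofReal_rho12_eq_indicator_add_indicator :
    (fun x => ENNReal.ofReal (rho12 x)) =
      (Icc 0 (1/2)).indicator (fun _ => ENNReal.ofReal (2/3)) +
        (Ioc (1/2) 1).indicator (fun _ => ENNReal.ofReal (4/3)) := by
  funext x
  simp only [rho12, Pi.add_apply, indicator_apply, mem_Icc, mem_Ioc]
  split_ifs with hA hB
  · exact absurd hA.2 hB.1.not_ge
  all_goals simp

theorem withDensity_rho12 :
    volume.withDensity (fun x => ENNReal.ofReal (rho12 x)) =
      ENNReal.ofReal (2/3) • volume.restrict (Icc 0 (1/2)) +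
        ENNReal.ofReal (4/3) • volume.restrict (Ioc (1/2) 1) := by
  rw [ofReal_rho12_eq_indicator_add_indicator,
    withDensity_add_left (measurable_const.indicator measurableSet_Icc),
    withDensity_indicator_const volume measurableSet_Icc,
    withDensity_indicator_const volume measurableSet_Ioc]

/-- The measure with density `ρ₀ = 2/3` on `[0,1/2]`, `4/3` on `(1/2,1]` is invariant
under the piecewise expanding map `f`. -/
theorem stmt12 :
    Measure.map f12 (volume.withDensity (fun x => ENNReal.ofReal (rho12 x))) =
      volume.withDensity (fun x => ENNReal.ofReal (rho12 x)) := by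
  have weight_left : ENNReal.ofReal (4/3) * ENNReal.ofReal (1/2) = ENNReal.ofReal (2/3) := by
    rw [← ENNReal.ofReal_mul (by norm_num)]
    norm_num
  have weight_right : ENNReal.ofReal (2/3) + ENNReal.ofReal (2/3) = ENNReal.ofReal (4/3) := by
    rw [← ENNReal.ofReal_add (by norm_num) (by norm_num)]
    norm_num
  rw [withDensity_rho12]
  set A := volume.restrict (Icc (0 : ℝ) (1/2))
  set B := volume.restrict (Ioc (1/2 : ℝ) 1)
  calc (ENNReal.ofReal (2/3) • A + ENNReal.ofReal (4/3) • B).map f12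
      = ENNReal.ofReal (2/3) • A.map f12 + ENNReal.ofReal (4/3) • B.map f12 := by
        rw [Measure.map_add _ _ measurable_f12, Measure.map_smul, Measure.map_smul]
    _ = ENNReal.ofReal (2/3) • B + ENNReal.ofReal (4/3) • ENNReal.ofReal (1/2) • (A + B) := by
        rw [map_f12_volume_restrict_Icc, map_f12_volume_restrict_Ioc]
    _ = ENNReal.ofReal (2/3) • A + ENNReal.ofReal (4/3) • B := by
        rw [smul_smul, weight_left, smul_add, add_left_comm, ← add_smul, weight_right]
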